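/- arXiv:1111.1387 — 3 statements merged into one kernel-verified Lean document; each statement's English description precedes it below -/
import Mathlib

section
/- Let n ≥ 1, 0 < α ≤ 1 and let w be an A_1 weight on ℝ^n. Then there exists a constant C > 0, independent of f and j, such that for every j ∈ ℤ_+ and every f ∈ L^1_loc(ℝ^n), ‖S_{α,2^j}(f)‖_{L^2_w} ≤ C · 2^{jn/2} · ‖S_α(f)‖_{L^2_w}, where ‖g‖_{L^2_w} = (∫_{ℝ^n} |g(x)|^2 w(x) dx)^{1/2}. -/
/-! The weighted norms are computed by Tonelli: writing `F = A_α(f)² / t^{n+1}`, the square of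
`‖S_{α,β}(f)‖_{L²_w}` equals `∬ F(y,t) w(B(y,βt)) dy dt` (`lintegral_Sbeta_sq`). The `A_1` condition
gives `w(B(y,βt)) ≤ C βⁿ w(B(y,t))` for `β ≥ 1` (`IsA1.wMeas_ball_le`), because the essential
infimum over the larger ball is at most the one over the smaller ball, hence at most the average
of `w` there. Comparing the two Tonelli formulas gives the estimate with constant `√C`.

Tonelli requires `F` to be measurable although `A_α(f)` is an uncountable supremum. For `t > 0` each
`(y,t) ↦ (f * φ_t)(y)` is continuous (`continuousAt_convPhi`), so that the supremum is lower
semicontinuous (`measurable_Aalpha`). -/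

open MeasureTheory Metric ENNReal Set

noncomputable section

/-- `ℝ^n` as a Euclidean space. -/
abbrev Rn (n : ℕ) := EuclideanSpace ℝ (Fin n)

/-- The weighted measure `w(E) = ∫_E w` of a set `E`. -/
def wMeas (n : ℕ) (w : Rn n → ℝ) (E : Set (Rn n)) : ℝ≥0∞ :=
  ∫⁻ x in E, ENNReal.ofReal (w x)

/-- The Muckenhoupt class `A_1`: `w` is a nonnegative locally integrable function with
`|B|⁻¹ ∫_B w ≤ C · ess inf_B w` for all balls `B`. -/
def IsA1 (n : ℕ) (w : Rn n → ℝ) : Prop :=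
  (∀ x, 0 ≤ w x) ∧ LocallyIntegrable w (volume : Measure (Rn n)) ∧
    ∃ C > 0, ∀ (x : Rn n) (r : ℝ), 0 < r →
      wMeas n w (ball x r) ≤
        ENNReal.ofReal C * volume (ball x r) *
          essInf (fun y => ENNReal.ofReal (w y)) ((volume : Measure (Rn n)).restrict (ball x r))

/-- The Muckenhoupt class `A_p` for `1 ≤ p < ∞` (for `p = 1` this is the `A_1` condition). -/
def IsAp (n : ℕ) (p : ℝ) (w : Rn n → ℝ) : Prop :=
  (∀ x, 0 ≤ w x) ∧ LocallyIntegrable w (volume : Measure (Rn n)) ∧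
    if p = 1 then
      ∃ C > 0, ∀ (x : Rn n) (r : ℝ), 0 < r →
        wMeas n w (ball x r) ≤
          ENNReal.ofReal C * volume (ball x r) *
            essInf (fun y => ENNReal.ofReal (w y)) ((volume : Measure (Rn n)).restrict (ball x r))
    else
      ∃ C > 0, ∀ (x : Rn n) (r : ℝ), 0 < r →
        wMeas n w (ball x r) *
          (∫⁻ y in ball x r, (ENNReal.ofReal (w y)) ^ (-(1 / (p - 1)))) ^ (p - 1) ≤
            ENNReal.ofReal C * (volume (ball x r)) ^ p

/-- The reverse Hölder class `RH_r`:
`(|B|⁻¹ ∫_B w^r)^{1/r} ≤ C · |B|⁻¹ ∫_B w` for all balls `B`. -/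
def IsRH (n : ℕ) (r : ℝ) (w : Rn n → ℝ) : Prop :=
  (∀ x, 0 ≤ w x) ∧ LocallyIntegrable w (volume : Measure (Rn n)) ∧
    ∃ C > 0, ∀ (x : Rn n) (ρ : ℝ), 0 < ρ →
      ((volume (ball x ρ))⁻¹ * ∫⁻ y in ball x ρ, (ENNReal.ofReal (w y)) ^ r) ^ (1 / r) ≤
        ENNReal.ofReal C * ((volume (ball x ρ))⁻¹ * ∫⁻ y in ball x ρ, ENNReal.ofReal (w y))

/-- The family `C_α`: real functions supported in the unit ball, with vanishing integral,
satisfying the Hölder condition `|φ(x) - φ(x')| ≤ |x - x'|^α`. -/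
def Calpha (n : ℕ) (α : ℝ) : Set (Rn n → ℝ) :=
  {φ | (∀ x : Rn n, 1 < ‖x‖ → φ x = 0) ∧ ((∫ x, φ x) = 0) ∧
    ∀ x x' : Rn n, |φ x - φ x'| ≤ ‖x - x'‖ ^ α}

/-- The convolution `(f * φ_t)(y)` where `φ_t(x) = t⁻ⁿ φ(x/t)`. -/
def convPhi (n : ℕ) (φ : Rn n → ℝ) (t : ℝ) (f : Rn n → ℝ) (y : Rn n) : ℝ :=
  ∫ z, (t ^ n)⁻¹ * φ (t⁻¹ • (y - z)) * f z

/-- `A_α(f)(y,t) = sup_{φ ∈ C_α} |(f * φ_t)(y)|`. -/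
def Aalpha (n : ℕ) (α : ℝ) (f : Rn n → ℝ) (y : Rn n) (t : ℝ) : ℝ≥0∞ :=
  ⨆ φ ∈ Calpha n α, ENNReal.ofReal |convPhi n φ t f y|

/-- The varying-aperture intrinsic square function `S_{α,β}(f)`. -/
def Sbeta (n : ℕ) (α β : ℝ) (f : Rn n → ℝ) (x : Rn n) : ℝ≥0∞ :=
  (∫⁻ p : Rn n × ℝ in {p : Rn n × ℝ | 0 < p.2 ∧ dist x p.1 < β * p.2},
      (Aalpha n α f p.1 p.2) ^ 2 / ENNReal.ofReal (p.2 ^ (n + 1))) ^ (1 / 2 : ℝ)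

/-- The intrinsic square function `S_α(f) = S_{α,1}(f)`. -/
def Salpha (n : ℕ) (α : ℝ) (f : Rn n → ℝ) (x : Rn n) : ℝ≥0∞ := Sbeta n α 1 f x

/-- The intrinsic `g^*_λ`-function `g^*_{λ,α}(f)`. -/
def gStar (n : ℕ) (α lam : ℝ) (f : Rn n → ℝ) (x : Rn n) : ℝ≥0∞ :=
  (∫⁻ p : Rn n × ℝ in {p : Rn n × ℝ | 0 < p.2},
      ENNReal.ofReal ((p.2 / (p.2 + dist x p.1)) ^ (lam * n)) *
        (Aalpha n α f p.1 p.2) ^ 2 / ENNReal.ofReal (p.2 ^ (n + 1))) ^ (1 / 2 : ℝ)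

/-- The intrinsic Littlewood–Paley `g`-function `g_α(f)`. -/
def galpha (n : ℕ) (α : ℝ) (f : Rn n → ℝ) (x : Rn n) : ℝ≥0∞ :=
  (∫⁻ t in Set.Ioi (0 : ℝ), (Aalpha n α f x t) ^ 2 / ENNReal.ofReal t) ^ (1 / 2 : ℝ)

/-- The weighted Morrey norm `‖f‖_{L^{1,κ}(w)} = sup_B w(B)^{-κ} ∫_B |f| w`. -/
def morrey (n : ℕ) (κ : ℝ) (w f : Rn n → ℝ) : ℝ≥0∞ :=
  ⨆ (x : Rn n) (r : ℝ) (_ : 0 < r),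
    (∫⁻ y in ball x r, ENNReal.ofReal |f y| * ENNReal.ofReal (w y)) /
      (wMeas n w (ball x r)) ^ κ

/-- The axis-parallel cube `Q(c, ℓ)` centered at `c` with side length `ℓ`. -/
def cube (n : ℕ) (c : Rn n) (ℓ : ℝ) : Set (Rn n) :=
  {x | ∀ i, |x i - c i| ≤ ℓ / 2}

lemma Calpha.continuous {n : ℕ} {α : ℝ} (hα : 0 < α) {φ : Rn n → ℝ} (hφ : φ ∈ Calpha n α) :
    Continuous φ := by
  refine continuous_iff_continuousAt.2 fun x => ?_
  rw [ContinuousAt, tendsto_iff_norm_sub_tendsto_zero]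
  have hlim : Filter.Tendsto (fun y => ‖y - x‖ ^ α) (nhds x) (nhds 0) := by
    have h : ContinuousAt (fun y : Rn n => ‖y - x‖ ^ α) x :=
      (by fun_prop : ContinuousAt (fun y : Rn n => ‖y - x‖) x).rpow_const (Or.inr hα.le)
    simpa [ContinuousAt, Real.zero_rpow hα.ne'] using h
  exact squeeze_zero (fun _ => norm_nonneg _) (fun y => hφ.2.2 y x) hlim

/-- Near `t₀`, the dilates `φ_t` are jointly continuous and supported in one compact ball, so
continuity of parametrized convolutions applies. -/
lemma continuousAt_convPhi {n : ℕ} {α : ℝ} (hα : 0 < α) {φ : Rn n → ℝ} (hφ : φ ∈ Calpha n α)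
    {f : Rn n → ℝ} (hf : LocallyIntegrable f (volume : Measure (Rn n)))
    (p : Rn n × ℝ) (hp : 0 < p.2) :
    ContinuousAt (fun p : Rn n × ℝ => convPhi n φ p.2 f p.1) p := by
  have hc := Calpha.continuous hα hφ
  let g : ℝ → Rn n → ℝ := fun t x => (t ^ n)⁻¹ * φ (t⁻¹ • x)
  have key := continuousOn_convolution_right_with_param (μ := (volume : Measure (Rn n)))
    (ContinuousLinearMap.mul ℝ ℝ) (g := g) (s := Ioo 0 (p.2 + 1))
    (k := closedBall (0 : Rn n) (p.2 + 1)) (isCompact_closedBall _ _) (f := f)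
    (by
      intro t x ht hx
      have h1 : p.2 + 1 < ‖x‖ := by simpa using hx
      have h2 : 1 < ‖t⁻¹ • x‖ := by
        rw [norm_smul, norm_inv, Real.norm_of_nonneg ht.1.le, ← div_eq_inv_mul, one_lt_div ht.1]
        exact ht.2.trans h1
      simp [g, hφ.1 _ h2]) hf
    (by
      intro q hq
      have h0 : q.1 ≠ 0 := hq.1.1.ne'
      have hinv : ContinuousAt (fun q : ℝ × Rn n => q.1⁻¹ • q.2) q :=
        (continuousAt_fst.inv₀ h0).smul continuousAt_snd
      have hpow : ContinuousAt (fun q : ℝ × Rn n => (q.1 ^ n)⁻¹) q :=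
        (continuousAt_fst.pow n).inv₀ (pow_ne_zero _ h0)
      exact (hpow.mul (hc.continuousAt.comp hinv)).continuousWithinAt)
  have hopen : Ioo 0 (p.2 + 1) ×ˢ (univ : Set (Rn n)) ∈ nhds (p.2, p.1) :=
    (isOpen_Ioo.prod isOpen_univ).mem_nhds ⟨⟨hp, by simp⟩, mem_univ _⟩
  have h := (key.continuousAt hopen).comp (f := fun p : Rn n × ℝ => (p.2, p.1)) (x := p)
    continuous_swap.continuousAt
  convert h using 1
  funext q
  simp only [convPhi, Function.comp, convolution, g, ContinuousLinearMap.mul_apply']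
  exact integral_congr_ae (Filter.Eventually.of_forall fun z => mul_comm _ _)

/-- The restriction to the open half-space `t > 0` costs nothing, as the cones lie in it, and makes
each term of the supremum lower semicontinuous everywhere. -/
lemma measurable_Aalpha {n : ℕ} {α : ℝ} (hα : 0 < α)
    {f : Rn n → ℝ} (hf : LocallyIntegrable f (volume : Measure (Rn n))) :
    Measurable ({p : Rn n × ℝ | 0 < p.2}.indicator fun p => Aalpha n α f p.1 p.2) := by
  have hopen : IsOpen {p : Rn n × ℝ | 0 < p.2} := isOpen_lt continuous_const continuous_snd
  have hEq : ({p : Rn n × ℝ | 0 < p.2}.indicator fun p => Aalpha n α f p.1 p.2) =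
      fun p => ⨆ φ ∈ Calpha n α, {p : Rn n × ℝ | 0 < p.2}.indicator
        (fun p => ENNReal.ofReal |convPhi n φ p.2 f p.1|) p := by
    funext p
    by_cases hp : p ∈ {p : Rn n × ℝ | 0 < p.2} <;> simp [hp, Aalpha]
  rw [hEq]
  refine LowerSemicontinuous.measurable (lowerSemicontinuous_biSup fun φ hφ => ?_)
  intro p c hcp
  by_cases hp : p ∈ {p : Rn n × ℝ | 0 < p.2}
  · rw [indicator_of_mem hp] at hcp
    have hcont : ContinuousAt
        (fun p : Rn n × ℝ => ENNReal.ofReal |convPhi n φ p.2 f p.1|) p :=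
      ENNReal.continuous_ofReal.continuousAt.comp (continuousAt_convPhi hα hφ hf p hp).abs
    filter_upwards [hcont.eventually (lt_mem_nhds hcp), hopen.mem_nhds hp] with q hq hq'
    have hq1 : q ∈ {p : Rn n × ℝ | 0 < p.2} := hq'
    rwa [indicator_of_mem hq1]
  · rw [indicator_of_notMem hp] at hcp
    exact absurd hcp ENNReal.not_lt_zero

/-- Tonelli's formula for the weighted `L²` norm of the square function of aperture `β`. -/
lemma lintegral_Sbeta_sq {n : ℕ} {α : ℝ} (hα : 0 < α) {w : Rn n → ℝ}
    (hw : LocallyIntegrable w (volume : Measure (Rn n)))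
    {f : Rn n → ℝ} (hf : LocallyIntegrable f (volume : Measure (Rn n))) (β : ℝ) :
    ∫⁻ x, (Sbeta n α β f x) ^ 2 * ENNReal.ofReal (w x) =
      ∫⁻ p : Rn n × ℝ, ({p : Rn n × ℝ | 0 < p.2}.indicator (fun p => Aalpha n α f p.1 p.2) p) ^ 2 /
        ENNReal.ofReal (p.2 ^ (n + 1)) * wMeas n w (ball p.1 (β * p.2)) := by
  set F : Rn n × ℝ → ℝ≥0∞ := fun p =>
    ({p : Rn n × ℝ | 0 < p.2}.indicator (fun p => Aalpha n α f p.1 p.2) p) ^ 2 /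
      ENNReal.ofReal (p.2 ^ (n + 1)) with hF
  have hFm : Measurable F := ((measurable_Aalpha hα hf).pow_const 2).div (by fun_prop)
  have hwm : AEMeasurable (fun x => ENNReal.ofReal (w x)) (volume : Measure (Rn n)) :=
    hw.aestronglyMeasurable.aemeasurable.ennreal_ofReal
  have hT : MeasurableSet {q : Rn n × (Rn n × ℝ) | dist q.1 q.2.1 < β * q.2.2} :=
    (isOpen_lt (by fun_prop) (by fun_prop)).measurableSet
  have hTx : ∀ x, MeasurableSet {p : Rn n × ℝ | dist x p.1 < β * p.2} := fun x =>
    (isOpen_lt (by fun_prop) (by fun_prop)).measurableSet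
  have hcone : ∀ x, (Sbeta n α β f x) ^ 2 =
      ∫⁻ p, {p : Rn n × ℝ | dist x p.1 < β * p.2}.indicator F p := by
    intro x
    have hm : MeasurableSet {p : Rn n × ℝ | 0 < p.2 ∧ dist x p.1 < β * p.2} :=
      (measurableSet_lt measurable_const measurable_snd).inter (hTx x)
    rw [Sbeta, ← ENNReal.rpow_natCast, ← ENNReal.rpow_mul]
    norm_num
    rw [← lintegral_indicator hm]
    refine lintegral_congr fun p => ?_
    by_cases h0 : 0 < p.2 <;> by_cases h1 : dist x p.1 < β * p.2 <;>
      simp [indicator, h0, h1, hF]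
  calc ∫⁻ x, (Sbeta n α β f x) ^ 2 * ENNReal.ofReal (w x)
      = ∫⁻ x, ∫⁻ p, {p : Rn n × ℝ | dist x p.1 < β * p.2}.indicator F p
          * ENNReal.ofReal (w x) := by
        refine lintegral_congr fun x => ?_
        rw [hcone, lintegral_mul_const _ (hFm.indicator (hTx x))]
    _ = ∫⁻ p, ∫⁻ x, {p : Rn n × ℝ | dist x p.1 < β * p.2}.indicator F p
          * ENNReal.ofReal (w x) := by
        refine lintegral_lintegral_swap ?_
        exact (((hFm.comp measurable_snd).indicator hT).aemeasurable).mul hwm.comp_fst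
    _ = ∫⁻ p, F p * wMeas n w (ball p.1 (β * p.2)) := by
        refine lintegral_congr fun p => ?_
        rw [wMeas, ← lintegral_indicator measurableSet_ball,
          ← lintegral_const_mul'' _ (hwm.indicator measurableSet_ball)]
        refine lintegral_congr fun x => ?_
        by_cases h1 : dist x p.1 < β * p.2 <;> simp [indicator, h1]

/-- The growth of an `A_1` weight on concentric balls is at most that of Lebesgue measure. -/
lemma IsA1.wMeas_ball_le {n : ℕ} {w : Rn n → ℝ} (hw : IsA1 n w) :
    ∃ C > (0 : ℝ), ∀ (y : Rn n) (t β : ℝ), 0 < t → 1 ≤ β →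
      wMeas n w (ball y (β * t)) ≤
        ENNReal.ofReal C * ENNReal.ofReal (β ^ n) * wMeas n w (ball y t) := by
  obtain ⟨-, -, C, hC, h⟩ := hw
  refine ⟨C, hC, fun y t β ht hβ => ?_⟩
  have hβ0 : 0 < β := one_pos.trans_le hβ
  have hsub : ball y t ⊆ ball y (β * t) := ball_subset_ball (le_mul_of_one_le_left ht.le hβ)
  have hvol : volume (ball y (β * t)) = ENNReal.ofReal (β ^ n) * volume (ball y t) := by
    rw [Measure.addHaar_ball_mul_of_pos _ _ hβ0, Measure.addHaar_ball_center _ y t]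
    simp
  have hinf : volume (ball y t) *
      essInf (fun z => ENNReal.ofReal (w z)) ((volume : Measure (Rn n)).restrict (ball y (β * t)))
        ≤ wMeas n w (ball y t) := by
    rw [mul_comm, ← setLIntegral_const, wMeas]
    refine lintegral_mono_ae ?_
    exact ae_restrict_of_ae_restrict_of_subset hsub ae_essInf_le
  calc wMeas n w (ball y (β * t)) ≤ _ := h y (β * t) (mul_pos hβ0 ht)
    _ = ENNReal.ofReal C * ENNReal.ofReal (β ^ n) * (volume (ball y t) *
      essInf (fun z => ENNReal.ofReal (w z))
        ((volume : Measure (Rn n)).restrict (ball y (β * t)))) := by rw [hvol]; ring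
    _ ≤ _ := by gcongr

/-- **Lemma 4.1.** For `w ∈ A_1` and `j ∈ ℤ_+`,
`‖S_{α,2^j}(f)‖_{L²_w} ≤ C · 2^{jn/2} · ‖S_α(f)‖_{L²_w}`. -/
theorem Sbeta_aperture_L2_bound (n : ℕ) (hn : 1 ≤ n) (α : ℝ) (hα : 0 < α ∧ α ≤ 1)
    (w : Rn n → ℝ) (hw : IsA1 n w) :
    ∃ C > (0 : ℝ), ∀ j : ℕ, 1 ≤ j →
      ∀ f : Rn n → ℝ, LocallyIntegrable f (volume : Measure (Rn n)) →
        (∫⁻ x, (Sbeta n α ((2 : ℝ) ^ j) f x) ^ 2 * ENNReal.ofReal (w x)) ^ (1 / 2 : ℝ) ≤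
          ENNReal.ofReal C * ENNReal.ofReal ((2 : ℝ) ^ (((j : ℝ) * n) / 2)) *
            (∫⁻ x, (Salpha n α f x) ^ 2 * ENNReal.ofReal (w x)) ^ (1 / 2 : ℝ) := by
  obtain ⟨C, hC, hball⟩ := hw.wMeas_ball_le
  refine ⟨C ^ (1 / 2 : ℝ), by positivity, fun j _ f hf => ?_⟩
  have hβ : (1 : ℝ) ≤ 2 ^ j := one_le_pow₀ (by norm_num)
  have hsq : ∫⁻ x, (Sbeta n α ((2 : ℝ) ^ j) f x) ^ 2 * ENNReal.ofReal (w x) ≤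
      ENNReal.ofReal C * ENNReal.ofReal (((2 : ℝ) ^ j) ^ n) *
        ∫⁻ x, (Salpha n α f x) ^ 2 * ENNReal.ofReal (w x) := by
    simp only [Salpha]
    rw [lintegral_Sbeta_sq hα.1 hw.2.1 hf, lintegral_Sbeta_sq hα.1 hw.2.1 hf,
      ← lintegral_const_mul' _ _ (by finiteness)]
    refine lintegral_mono fun p => ?_
    by_cases hp : 0 < p.2
    · rw [mul_left_comm, one_mul]
      gcongr
      exact hball p.1 p.2 _ hp hβ
    · simp [indicator, hp]
  have hpow : (2 : ℝ) ^ (((j : ℝ) * n) / 2) = (((2 : ℝ) ^ j) ^ n) ^ (1 / 2 : ℝ) := by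
    rw [← pow_mul, ← Real.rpow_natCast, ← Real.rpow_mul (by norm_num)]
    push_cast
    ring_nf
  calc _ ≤ _ := ENNReal.rpow_le_rpow hsq (by norm_num : (0 : ℝ) ≤ 1 / 2)
    _ = _ := by
      rw [ENNReal.mul_rpow_of_nonneg _ _ (by norm_num), ENNReal.mul_rpow_of_nonneg _ _ (by norm_num),
        ENNReal.ofReal_rpow_of_pos hC, ENNReal.ofReal_rpow_of_pos (by positivity), hpow]
end
end

section
/- Let n ≥ 1 and 0 < α ≤ 1. Then there exists a constant C > 0, depending only on n, such that for every f ∈ L^1_loc(ℝ^n), every ball B = B(x_0,r_B) ⊆ ℝ^n and every x ∈ B, S_α(f·χ_{(2B)^c})(x) ≤ C · Σ_{j=1}^∞ |2^{j+1}B|^{-1} ∫_{2^{j+1}B} |f(z)| dz, where χ_{(2B)^c} is the characteristic function of the complement of 2B and 2^{j+1}B is the ball concentric with B of radius 2^{j+1}r_B. -/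
/-!
Only the size of the test functions matters for the far part. Each `φ ∈ C_α` satisfies `|φ| ≤ 3`
(compare with a point of norm `2`, where `φ` vanishes). If `x ∈ B`, `|x - y| < t` and
`|y - z| ≤ t`, then `|z - x₀| < 2t + r`; so the average of `f·χ_{(2B)^c}` at `(y, t)` vanishes for
`t ≤ r/2`, and for `2^k r / 2 ≤ t ≤ 2^k r` it only sees `2^{k+2}B` and is at most
`3 · 8^n · V · a_k`, where `V` is the volume of the unit ball and `a_k` is the mean of `|f|` over
`2^{k+2}B` (`Aalpha_le`, `Aalpha_dyadic`).

The part of the cone at height `t ∈ [2^k r / 2, 2^k r]` lies in the box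
`B(x, 2^k r) × [2^k r / 2, 2^k r]`, whose measure with respect to `dy dt / t^{n+1}` is at most
`2^n V`. Summing over `k` bounds the square of `S_α` by a constant times `∑ a_k²`, and
`∑ a_k² ≤ (∑ a_k)²`.
-/

open MeasureTheory Metric ENNReal Set

noncomputable section

/-- Every `φ ∈ C_α` is bounded by `3`, uniformly in `α`: compare `φ u` with the value `0` at a point
of norm `2`. This is where `n ≥ 1` enters. -/
lemma Calpha_bound (n : ℕ) (hn : 1 ≤ n) {α : ℝ} (hα : 0 < α ∧ α ≤ 1) {φ : Rn n → ℝ}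
    (hφ : φ ∈ Calpha n α) (u : Rn n) : |φ u| ≤ 3 := by
  obtain ⟨h1, -, h3⟩ := hφ
  by_cases hu : 1 < ‖u‖
  · rw [h1 u hu]; norm_num
  · push Not at hu
    have : Nonempty (Fin n) := ⟨⟨0, hn⟩⟩
    obtain ⟨v, hv⟩ := NormedSpace.exists_lt_norm ℝ (Rn n) 0
    set w : Rn n := (2 / ‖v‖) • v with hw
    have hwn : ‖w‖ = 2 := by
      rw [hw, norm_smul, Real.norm_of_nonneg (by positivity)]
      field_simp
    have h := h3 u w
    rw [h1 w (by rw [hwn]; norm_num), sub_zero] at h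
    have h4 : ‖u - w‖ ≤ 3 := by
      have := norm_sub_le u w
      linarith
    calc |φ u| ≤ ‖u - w‖ ^ α := h
      _ ≤ 3 ^ α := Real.rpow_le_rpow (norm_nonneg _) h4 hα.1.le
      _ ≤ 3 ^ (1 : ℝ) := Real.rpow_le_rpow_of_exponent_le (by norm_num) hα.2
      _ = 3 := Real.rpow_one 3

/-- The average at `(y, t)` only sees `g` on a ball about `x₀` of radius `2t + r`. -/
lemma Aalpha_le (n : ℕ) (hn : 1 ≤ n) {α : ℝ} (hα : 0 < α ∧ α ≤ 1) (g : Rn n → ℝ)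
    {x₀ x y : Rn n} {r t ρ : ℝ} (hx : x ∈ ball x₀ r) (ht : 0 < t) (hy : dist x y < t)
    (hρ : 2 * t + r ≤ ρ) :
    Aalpha n α g y t ≤
      ENNReal.ofReal (3 / t ^ n) * ∫⁻ z in ball x₀ ρ, ENNReal.ofReal |g z| := by
  refine iSup₂_le fun φ hφ => ?_
  rw [← lintegral_indicator measurableSet_ball, ← lintegral_const_mul' _ _ ofReal_ne_top,
    ← Real.enorm_eq_ofReal_abs]
  refine (enorm_integral_le_lintegral_enorm _).trans (lintegral_mono fun z => ?_)
  rw [Real.enorm_eq_ofReal_abs]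
  by_cases hz : z ∈ ball x₀ ρ
  · rw [Set.indicator_of_mem hz, ← ENNReal.ofReal_mul (by positivity)]
    apply ENNReal.ofReal_le_ofReal
    rw [abs_mul, abs_mul, abs_of_nonneg (by positivity : (0 : ℝ) ≤ (t ^ n)⁻¹)]
    have := Calpha_bound n hn hα hφ (t⁻¹ • (y - z))
    rw [div_eq_inv_mul]
    gcongr
  -- Outside the ball the kernel itself vanishes.
  · have h1 : 1 < ‖t⁻¹ • (y - z)‖ := by
      rw [norm_smul, Real.norm_of_nonneg (by positivity), ← dist_eq_norm, inv_mul_eq_div,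
        lt_div_iff₀ ht, one_mul]
      rw [mem_ball, not_lt] at hz
      rw [mem_ball] at hx
      have h2 := dist_triangle4 z y x x₀
      rw [dist_comm z y, dist_comm y x] at h2
      linarith
    rw [hφ.1 _ h1]
    simp

lemma volume_ball_Rn (n : ℕ) (x : Rn n) {ρ : ℝ} (hρ : 0 < ρ) :
    volume (ball x ρ) = ENNReal.ofReal (ρ ^ n) * volume (ball (0 : Rn n) 1) := by
  rw [Measure.addHaar_ball_of_pos _ _ hρ]
  simp

/-- At height `t ∈ [2^k r / 2, 2^k r]`, `A_α` is at most a dimensional constant times the mean of `|f|`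
over `2^{k+2}B`, because `2t + r ≤ 2^{k+2} r ≤ 8t`. -/
lemma Aalpha_dyadic (n : ℕ) (hn : 1 ≤ n) {α : ℝ} (hα : 0 < α ∧ α ≤ 1) (f : Rn n → ℝ)
    {x₀ x y : Rn n} {r t : ℝ} (hr : 0 < r) (hx : x ∈ ball x₀ r) (hy : dist x y < t) (k : ℕ)
    (hk : 2 ^ k * r / 2 ≤ t) (hk' : t ≤ 2 ^ k * r) :
    Aalpha n α (Set.indicator (ball x₀ (2 * r))ᶜ f) y t ≤
      (ENNReal.ofReal (3 * 8 ^ n) * volume (ball (0 : Rn n) 1)) *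
        ((volume (ball x₀ ((2 : ℝ) ^ (k + 2) * r)))⁻¹ *
          ∫⁻ z in ball x₀ ((2 : ℝ) ^ (k + 2) * r), ENNReal.ofReal |f z|) := by
  have ht : 0 < t := lt_of_lt_of_le (by positivity) hk
  have hk1 : (1 : ℝ) ≤ 2 ^ k := one_le_pow₀ (by norm_num)
  have hpow : (2 : ℝ) ^ (k + 2) * r = 4 * (2 ^ k * r) := by ring
  set ρ := (2 : ℝ) ^ (k + 2) * r with hρ
  have hρ0 : 0 < ρ := by positivity
  have hrk : r ≤ 2 ^ k * r := by nlinarith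
  refine (Aalpha_le n hn hα _ hx ht hy (ρ := ρ) (by linarith)).trans ?_
  have hI : ∫⁻ z in ball x₀ ρ, ENNReal.ofReal |Set.indicator (ball x₀ (2 * r))ᶜ f z| ≤
      ∫⁻ z in ball x₀ ρ, ENNReal.ofReal |f z| := by
    refine lintegral_mono fun z => ENNReal.ofReal_le_ofReal ?_
    by_cases hz : z ∈ (ball x₀ (2 * r))ᶜ
    · rw [Set.indicator_of_mem hz]
    · rw [Set.indicator_of_notMem hz]; simp
  have hvol := volume_ball_Rn n x₀ hρ0
  have hv0 : volume (ball x₀ ρ) ≠ 0 := (measure_ball_pos _ _ hρ0).ne'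
  have hv1 : volume (ball x₀ ρ) ≠ ⊤ := measure_ball_lt_top.ne
  have hc : ENNReal.ofReal (3 / t ^ n) * volume (ball x₀ ρ) ≤
      ENNReal.ofReal (3 * 8 ^ n) * volume (ball (0 : Rn n) 1) := by
    rw [hvol, ← mul_assoc, ← ENNReal.ofReal_mul (by positivity)]
    refine mul_le_mul' (ENNReal.ofReal_le_ofReal ?_) le_rfl
    have : ρ ^ n ≤ 8 ^ n * t ^ n := by
      rw [← mul_pow]
      exact pow_le_pow_left₀ hρ0.le (by linarith) n
    rw [div_mul_eq_mul_div, div_le_iff₀ (by positivity)]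
    linarith
  calc _ ≤ ENNReal.ofReal (3 / t ^ n) * ∫⁻ z in ball x₀ ρ, ENNReal.ofReal |f z| := by gcongr
    _ = ENNReal.ofReal (3 / t ^ n) * volume (ball x₀ ρ) *
        ((volume (ball x₀ ρ))⁻¹ * ∫⁻ z in ball x₀ ρ, ENNReal.ofReal |f z|) := by
      rw [mul_assoc, ← mul_assoc (volume _), ENNReal.mul_inv_cancel hv0 hv1, one_mul]
    _ ≤ _ := by gcongr

/-- For `t ≤ r/2` the average stays inside `2B`, where the far part of `f` vanishes. -/
lemma Aalpha_eq_zero (n : ℕ) (hn : 1 ≤ n) {α : ℝ} (hα : 0 < α ∧ α ≤ 1) (f : Rn n → ℝ)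
    {x₀ x y : Rn n} {r t : ℝ} (hx : x ∈ ball x₀ r) (ht : 0 < t) (hy : dist x y < t)
    (htr : t ≤ r / 2) : Aalpha n α (Set.indicator (ball x₀ (2 * r))ᶜ f) y t = 0 := by
  have h := Aalpha_le n hn hα (Set.indicator (ball x₀ (2 * r))ᶜ f) hx ht hy (ρ := 2 * r)
    (by linarith)
  have h0 : ∫⁻ z in ball x₀ (2 * r), ENNReal.ofReal |Set.indicator (ball x₀ (2 * r))ᶜ f z| = 0 := by
    rw [setLIntegral_congr_fun measurableSet_ball (g := fun _ => 0)]
    · simp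
    · intro z hz
      simp [Set.indicator_of_notMem (show z ∉ (ball x₀ (2 * r))ᶜ from fun h => h hz)]
  rw [h0, mul_zero] at h
  exact le_antisymm h bot_le

/-- The box `B(x, s) × [s/2, s]` has measure at most `2^n V` for `dy dt / t^{n+1}`. -/
lemma box_bound (n : ℕ) (x : Rn n) {s : ℝ} (hs : 0 < s) (a : ℝ≥0∞) :
    a / ENNReal.ofReal ((s / 2) ^ (n + 1)) * volume (ball x s ×ˢ Set.Icc (s / 2) s) ≤
      (ENNReal.ofReal (2 ^ n) * volume (ball (0 : Rn n) 1)) * a := by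
  rw [Measure.volume_eq_prod, Measure.prod_prod, volume_ball_Rn n x hs, Real.volume_Icc,
    div_eq_mul_inv, ← ENNReal.ofReal_inv_of_pos (by positivity)]
  have h : ENNReal.ofReal (((s / 2) ^ (n + 1))⁻¹) * ENNReal.ofReal (s ^ n) *
      ENNReal.ofReal (s - s / 2) = ENNReal.ofReal (2 ^ n) := by
    rw [← ENNReal.ofReal_mul (by positivity), ← ENNReal.ofReal_mul (by positivity)]
    congr 1
    rw [show s - s / 2 = s / 2 by ring, pow_succ, div_pow]
    field_simp
  rw [← h]
  apply le_of_eq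
  ring

lemma tsum_sq_le (a : ℕ → ℝ≥0∞) : ∑' k, a k ^ 2 ≤ (∑' k, a k) ^ 2 := by
  rw [sq (∑' k, a k), ← ENNReal.tsum_mul_right]
  refine ENNReal.tsum_le_tsum fun k => ?_
  rw [sq]
  gcongr
  exact ENNReal.le_tsum k

/-- **Estimate (2).** For `x ∈ B`, the intrinsic square function of `f·χ_{(2B)^c}` is
dominated by `C · Σ_{j=1}^∞ |2^{j+1}B|⁻¹ ∫_{2^{j+1}B} |f|`, with `C` depending only on `n`. -/
theorem Salpha_far_part_pointwise (n : ℕ) (hn : 1 ≤ n) :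
    ∃ C > (0 : ℝ), ∀ α : ℝ, 0 < α ∧ α ≤ 1 →
      ∀ f : Rn n → ℝ, LocallyIntegrable f (volume : Measure (Rn n)) →
        ∀ (x₀ : Rn n) (r : ℝ), 0 < r → ∀ x ∈ ball x₀ r,
          Salpha n α (Set.indicator (ball x₀ (2 * r))ᶜ f) x ≤
            ENNReal.ofReal C *
              ∑' j : ℕ, (volume (ball x₀ ((2 : ℝ) ^ (j + 2) * r)))⁻¹ *
                ∫⁻ z in ball x₀ ((2 : ℝ) ^ (j + 2) * r), ENNReal.ofReal |f z| := by
  set V := volume (ball (0 : Rn n) 1) with hV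
  have hVtop : V ≠ ⊤ := measure_ball_lt_top.ne
  set K := ENNReal.ofReal (3 * 8 ^ n) * V with hK
  set D := ENNReal.ofReal (2 ^ n) * V with hD
  have hKD : K * (D + 1) ≠ ⊤ :=
    mul_ne_top (mul_ne_top ofReal_ne_top hVtop)
      (add_ne_top.2 ⟨mul_ne_top ofReal_ne_top hVtop, one_ne_top⟩)
  -- `K` bounds `A_α` on a dyadic layer and `D` the measure of the layer. `D + 1` stands in for `√D`,
  -- and the final `+ 1` makes positivity of the constant immediate.
  refine ⟨(K * (D + 1)).toReal + 1, by positivity, ?_⟩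
  intro α hα f _ x₀ r hr x hx
  set a : ℕ → ℝ≥0∞ := fun j => (volume (ball x₀ ((2 : ℝ) ^ (j + 2) * r)))⁻¹ *
                ∫⁻ z in ball x₀ ((2 : ℝ) ^ (j + 2) * r), ENNReal.ofReal |f z| with ha
  set box : ℕ → Set (Rn n × ℝ) :=
    fun k => ball x (2 ^ k * r) ×ˢ Set.Icc (2 ^ k * r / 2) (2 ^ k * r) with hbox
  set c : ℕ → ℝ≥0∞ := fun k => (K * a k) ^ 2 / ENNReal.ofReal ((2 ^ k * r / 2) ^ (n + 1)) with hc
  have hboxm : ∀ k, MeasurableSet (box k) := fun k => measurableSet_ball.prod measurableSet_Icc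
  have hcone : MeasurableSet {p : Rn n × ℝ | 0 < p.2 ∧ dist x p.1 < 1 * p.2} := by
    apply MeasurableSet.inter
    · exact measurableSet_lt measurable_const measurable_snd
    · exact measurableSet_lt (measurable_const.dist measurable_fst) (measurable_snd.const_mul 1)
  have hpt : ∀ p ∈ {p : Rn n × ℝ | 0 < p.2 ∧ dist x p.1 < 1 * p.2},
      (Aalpha n α (Set.indicator (ball x₀ (2 * r))ᶜ f) p.1 p.2) ^ 2 /
        ENNReal.ofReal (p.2 ^ (n + 1)) ≤ ∑' k, (box k).indicator (fun _ => c k) p := by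
    rintro ⟨y, t⟩ ⟨ht, hy⟩
    simp only [one_mul] at ht hy ⊢
    rcases le_or_gt t (r / 2) with htr | htr
    · rw [Aalpha_eq_zero n hn hα f hx ht hy htr]
      simp
    · obtain ⟨k, hk, hk'⟩ := exists_nat_pow_near (x := 2 * t / r) (y := 2)
        (by rw [le_div_iff₀ hr]; linarith) (by norm_num)
      rw [le_div_iff₀ hr] at hk
      rw [div_lt_iff₀ hr, pow_succ] at hk'
      have hk1 : 2 ^ k * r / 2 ≤ t := by linarith
      have hk2 : t ≤ 2 ^ k * r := by linarith
      have hmem : (y, t) ∈ box k := by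
        refine ⟨?_, hk1, hk2⟩
        rw [mem_ball, dist_comm]
        exact hy.trans_le hk2
      refine le_trans ?_ (ENNReal.le_tsum k)
      rw [Set.indicator_of_mem hmem]
      have hA := Aalpha_dyadic n hn hα f hr hx hy k hk1 hk2
      simp only [hc]
      gcongr
  have hS2 : ∫⁻ p : Rn n × ℝ in {p : Rn n × ℝ | 0 < p.2 ∧ dist x p.1 < 1 * p.2},
      (Aalpha n α (Set.indicator (ball x₀ (2 * r))ᶜ f) p.1 p.2) ^ 2 /
        ENNReal.ofReal (p.2 ^ (n + 1)) ≤ (K * (D + 1) * ∑' k, a k) ^ 2 := by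
    calc _ ≤ ∫⁻ p : Rn n × ℝ in {p : Rn n × ℝ | 0 < p.2 ∧ dist x p.1 < 1 * p.2},
          ∑' k, (box k).indicator (fun _ => c k) p := setLIntegral_mono' hcone hpt
      _ ≤ ∫⁻ p : Rn n × ℝ, ∑' k, (box k).indicator (fun _ => c k) p := setLIntegral_le_lintegral _ _
      _ = ∑' k, c k * volume (box k) := by
        rw [lintegral_tsum fun k => (measurable_const.indicator (hboxm k)).aemeasurable]
        exact tsum_congr fun k => lintegral_indicator_const (hboxm k) _
      _ ≤ ∑' k, D * (K * a k) ^ 2 :=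
        ENNReal.tsum_le_tsum fun k => box_bound n x (by positivity) _
      _ = D * K ^ 2 * ∑' k, a k ^ 2 := by
        rw [← ENNReal.tsum_mul_left]
        exact tsum_congr fun k => by ring
      _ ≤ (D + 1) ^ 2 * K ^ 2 * (∑' k, a k) ^ 2 := by
        gcongr
        · calc D ≤ D + 1 := le_self_add
            _ = (D + 1) * 1 := (mul_one _).symm
            _ ≤ (D + 1) * (D + 1) := by gcongr; exact le_add_self
            _ = (D + 1) ^ 2 := (sq _).symm
        · exact tsum_sq_le a
      _ = _ := by ring
  calc Salpha n α (Set.indicator (ball x₀ (2 * r))ᶜ f) x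
      ≤ ((K * (D + 1) * ∑' k, a k) ^ 2) ^ (1 / 2 : ℝ) :=
        ENNReal.rpow_le_rpow hS2 (by norm_num)
    _ = K * (D + 1) * ∑' k, a k := by
      rw [← ENNReal.rpow_natCast, ← ENNReal.rpow_mul]
      norm_num
    _ ≤ _ := by
      gcongr
      rw [← ENNReal.ofReal_toReal hKD]
      apply ENNReal.ofReal_le_ofReal
      rw [ENNReal.toReal_ofReal (by positivity)]
      linarith
end
end

section
/- Let n ≥ 1 and 0 < α ≤ 1. There exists a constant C > 0, depending only on n, such that the following holds: let Q ⊆ ℝ^n be an axis-parallel cube with center c and side length ℓ(Q), and let b ∈ L^1(ℝ^n) be supported in Q with ∫_{ℝ^n} b = 0. Then for every φ ∈ C_α, every t > 0 and every y ∈ ℝ^n, |(b*φ_t)(y)| ≤ C · ℓ(Q)^α · t^{-(n+α)} · ∫_{Q ∩ {z : |z-y| ≤ t}} |b(z)| dz. -/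
/-!
Write `S = Q ∩ {z : |z - y| ≤ t}`. Two points of `Q` are at distance at most `√n ℓ`, so for
`z, z' ∈ Q` the Hölder condition bounds `|φ((y - z)/t) - φ((y - z')/t)|` by
`(√n ℓ / t)^α ≤ √n ℓ^α t^{-α}` (`Calpha_sub_le`). To have the integral of `|b|` over `S` only on
the right, distinguish two cases.

* If some `z₀ ∈ Q` has `|z₀ - y| > t`, then `φ((y - z₀)/t) = 0`, and the Hölder estimate bounds
  `φ((y - z)/t)` itself on `S`; off `S` the integrand vanishes. Cancellation of `b` is not used.
* Otherwise `S = Q`, and `∫ b = 0` allows `φ((y - c)/t)` to be subtracted from `φ((y - z)/t)`.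

In both cases the integrand is dominated by a multiple of `|b|` on `S`
(`abs_integral_le_of_bound_on`).
-/


open MeasureTheory Metric ENNReal Set

noncomputable section

lemma measurableSet_cube (n : ℕ) (c : Rn n) (ℓ : ℝ) : MeasurableSet (cube n c ℓ) := by
  have h : IsClosed (cube n c ℓ) := by
    simp only [cube, Set.ofPred_forall]
    exact isClosed_iInter fun i => isClosed_le (by fun_prop) continuous_const
  exact h.measurableSet

lemma norm_sub_le_of_mem_cube {n : ℕ} {c z z' : Rn n} {ℓ : ℝ} (hℓ : 0 < ℓ)
    (hz : z ∈ cube n c ℓ) (hz' : z' ∈ cube n c ℓ) : ‖z - z'‖ ≤ √n * ℓ := by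
  rw [EuclideanSpace.norm_eq, ← Real.sqrt_sq hℓ.le, ← Real.sqrt_mul (Nat.cast_nonneg n)]
  apply Real.sqrt_le_sqrt
  have h : ∀ i ∈ Finset.univ, ‖(z - z') i‖ ^ 2 ≤ ℓ ^ 2 := by
    intro i _
    have h1 := abs_le.1 (hz i)
    have h2 := abs_le.1 (hz' i)
    have h3 : ‖(z - z') i‖ ≤ ℓ := by
      rw [Real.norm_eq_abs, PiLp.sub_apply, abs_le]
      constructor <;> linarith
    gcongr
  simpa using Finset.sum_le_card_nsmul Finset.univ _ _ h

/-- Hölder oscillation of `z ↦ φ((y - z)/t)` over the cube. The constant `√n` is uniform in `α`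
because `(√n)^α ≤ √n` for `n ≥ 1` and `α ≤ 1`. -/
lemma Calpha_sub_le {n : ℕ} (hn : 1 ≤ n) {α : ℝ} (hα : 0 < α) (hα1 : α ≤ 1) {c z z' : Rn n}
    {ℓ : ℝ} (hℓ : 0 < ℓ) {φ : Rn n → ℝ} (hφ : φ ∈ Calpha n α) {t : ℝ} (ht : 0 < t) (y : Rn n)
    (hz : z ∈ cube n c ℓ) (hz' : z' ∈ cube n c ℓ) :
    |φ (t⁻¹ • (y - z)) - φ (t⁻¹ • (y - z'))| ≤ √n * ℓ ^ α * t ^ (-α) := by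
  have hs : 1 ≤ √(n : ℝ) := Real.one_le_sqrt.2 (by exact_mod_cast hn)
  have hdist : ‖t⁻¹ • (y - z) - t⁻¹ • (y - z')‖ ≤ t⁻¹ * (√n * ℓ) := by
    rw [← smul_sub, (by abel : y - z - (y - z') = z' - z), norm_smul, Real.norm_of_nonneg (by positivity)]
    gcongr
    exact norm_sub_le_of_mem_cube hℓ hz' hz
  calc _ ≤ ‖t⁻¹ • (y - z) - t⁻¹ • (y - z')‖ ^ α := hφ.2.2 _ _
    _ ≤ (t⁻¹ * (√n * ℓ)) ^ α := by gcongr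
    _ = (√n) ^ α * ℓ ^ α * t ^ (-α) := by
      rw [Real.mul_rpow (by positivity) (by positivity),
        Real.mul_rpow (by positivity) (by positivity), Real.inv_rpow ht.le, Real.rpow_neg ht.le]
      ring
    _ ≤ √n * ℓ ^ α * t ^ (-α) := by
      gcongr
      simpa using Real.rpow_le_rpow_of_exponent_le hs hα1

lemma abs_integral_le_of_bound_on {n : ℕ} {b g : Rn n → ℝ} (hb : Integrable b) {S : Set (Rn n)}
    (hS : MeasurableSet S) {K : ℝ} (hg : ∀ z ∈ S, |g z| ≤ K * |b z|) (hg0 : ∀ z ∉ S, g z = 0) :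
    |∫ z, g z| ≤ K * ∫ z in S, |b z| := by
  rw [← setIntegral_eq_integral_of_forall_compl_eq_zero hg0, ← integral_const_mul]
  rw [← Real.norm_eq_abs]
  refine norm_integral_le_of_norm_le (hb.abs.const_mul K).integrableOn ?_
  exact ae_restrict_of_forall_mem hS hg

/-- **Estimate (10).** If `b` is integrable, supported in a cube `Q` and has vanishing
integral, then for every `φ ∈ C_α`, `t > 0` and `y`:
`|(b*φ_t)(y)| ≤ C·ℓ(Q)^α·t^{-(n+α)}·∫_{Q ∩ {|z-y|≤t}} |b|`, with `C` depending only on `n`. -/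
theorem conv_cancellation_bound (n : ℕ) (hn : 1 ≤ n) :
    ∃ C > (0 : ℝ), ∀ α : ℝ, 0 < α ∧ α ≤ 1 →
      ∀ (c : Rn n) (ℓ : ℝ), 0 < ℓ →
        ∀ b : Rn n → ℝ, Integrable b (volume : Measure (Rn n)) →
          (∀ z, z ∉ cube n c ℓ → b z = 0) → ((∫ z, b z) = 0) →
          ∀ φ ∈ Calpha n α, ∀ t : ℝ, 0 < t → ∀ y : Rn n,
            |convPhi n φ t b y| ≤
              C * ℓ ^ α * t ^ (-((n : ℝ) + α)) *
                ∫ z in cube n c ℓ ∩ Metric.closedBall y t, |b z| := by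
  refine ⟨√n, Real.sqrt_pos.2 (by exact_mod_cast hn), ?_⟩
  rintro α ⟨hα, hα1⟩ c ℓ hℓ b hb hbQ hb0 φ hφ t ht y
  have hK : √n * ℓ ^ α * t ^ (-((n : ℝ) + α)) = (t ^ n)⁻¹ * (√n * ℓ ^ α * t ^ (-α)) := by
    rw [neg_add, Real.rpow_add ht, Real.rpow_neg ht.le, Real.rpow_natCast]
    ring
  have hS : MeasurableSet (cube n c ℓ ∩ closedBall y t) :=
    (measurableSet_cube n c ℓ).inter measurableSet_closedBall
  have hfar : ∀ z ∉ closedBall y t, φ (t⁻¹ • (y - z)) = 0 := by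
    intro z hz
    apply hφ.1
    rw [mem_closedBall, dist_comm, dist_eq_norm, not_le] at hz
    rw [norm_smul, Real.norm_of_nonneg (by positivity), inv_mul_eq_div]
    exact (one_lt_div ht).2 hz
  -- If `d` is within Hölder distance of all values of `φ((y - z)/t)` on `Q`, the integrand with
  -- `d` subtracted is pointwise dominated.
  have hbound : ∀ d : ℝ, ∀ z,
      |φ (t⁻¹ • (y - z)) - d| ≤ √n * ℓ ^ α * t ^ (-α) →
      |(t ^ n)⁻¹ * (φ (t⁻¹ • (y - z)) - d) * b z| ≤
        (t ^ n)⁻¹ * (√n * ℓ ^ α * t ^ (-α)) * |b z| := by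
    intro d z h
    rw [abs_mul, abs_mul, abs_of_pos (by positivity : 0 < (t ^ n)⁻¹)]
    gcongr
  rw [hK]
  unfold convPhi
  by_cases hsub : cube n c ℓ ⊆ closedBall y t
  · have hc : c ∈ cube n c ℓ := fun i => by simpa using (half_pos hℓ).le
    by_cases hint : Integrable fun z => (t ^ n)⁻¹ * φ (t⁻¹ • (y - z)) * b z
    · have heq : ∫ z, (t ^ n)⁻¹ * φ (t⁻¹ • (y - z)) * b z =
          ∫ z, (t ^ n)⁻¹ * (φ (t⁻¹ • (y - z)) - φ (t⁻¹ • (y - c))) * b z := by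
        simp_rw [mul_sub, sub_mul]
        rw [integral_sub hint (hb.const_mul _), integral_const_mul, hb0, mul_zero, sub_zero]
      rw [heq]
      refine abs_integral_le_of_bound_on hb hS
        (fun z hz => hbound _ z (Calpha_sub_le hn hα hα1 hℓ hφ ht y hz.1 hc)) fun z hz => ?_
      rw [hbQ z fun h => hz ⟨h, hsub h⟩, mul_zero]
    · -- This case does not occur, `φ` being bounded and continuous; it is cheaper to note that
      -- the integral would then be `0` by convention.
      rw [integral_undef hint, abs_zero]
      have : 0 ≤ ∫ z in cube n c ℓ ∩ closedBall y t, |b z| :=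
        integral_nonneg fun z => abs_nonneg _
      positivity
  · obtain ⟨z₀, hz₀, hz₀'⟩ := Set.not_subset.1 hsub
    refine abs_integral_le_of_bound_on hb hS (fun z hz => ?_) fun z hz => ?_
    · have h := Calpha_sub_le hn hα hα1 hℓ hφ ht y hz.1 hz₀
      rw [hfar z₀ hz₀'] at h
      simpa using hbound 0 z h
    · by_cases hzQ : z ∈ cube n c ℓ
      · rw [hfar z fun h => hz ⟨hzQ, h⟩, mul_zero, zero_mul]
      · rw [hbQ z hzQ, mul_zero]
end
end
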